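/- Assume the base hypotheses and Condition (M). Suppose f∘F⁻¹ ∈ RV_∞(-1), F⁻¹ ∈ RV_∞(0), and there exists L > 0 such that lim_{t→∞} g(t)/(f∘F⁻¹)(t) = L. Then the unique continuous solution x of x'(t) = -f(x(t)) + g(t), x(0) = ξ > 0, satisfies x(t) → 0 as t → ∞ and lim_{t→∞} F(x(t))/t = 1/(L+1). -/

import Mathlib

open Filter Real Set Topology MeasureTheory

noncomputable section

/-- A function `f : (0,∞) → (0,∞)` is regularly varying at `0` with index `β` if
`f(λx)/f(x) → λ^β` as `x → 0⁺` for every `λ > 0`. -/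
def RVat0 (f : ℝ → ℝ) (β : ℝ) : Prop :=
  ∀ lam : ℝ, 0 < lam →
    Tendsto (fun x => f (lam * x) / f x) (nhdsWithin 0 (Set.Ioi 0)) (nhds (lam ^ β))

/-- A function `h : (0,∞) → (0,∞)` is regularly varying at `∞` with index `α` if
`h(λt)/h(t) → λ^α` as `t → ∞` for every `λ > 0`. -/
def RVatInf (h : ℝ → ℝ) (α : ℝ) : Prop :=
  ∀ lam : ℝ, 0 < lam →
    Tendsto (fun t => h (lam * t) / h t) atTop (nhds (lam ^ α))

/-- A continuous solution of the perturbed ODE `x'(t) = -f(x(t)) + g(t)`, `t > 0`,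
with initial condition `x(0) = ξ`. -/
def IsSol (f g : ℝ → ℝ) (ξ : ℝ) (x : ℝ → ℝ) : Prop :=
  ContinuousOn x (Set.Ici 0) ∧ x 0 = ξ ∧
    ∀ t : ℝ, 0 < t → HasDerivAt x (-f (x t) + g t) t

/-! In the variable `y = F ∘ x` the equation reads `y' = 1 - g / h(y)` with `h = f ∘ F⁻¹`. Along a
ray `y = μ t`, regular variation of `h` with index `-β` gives `g(t) / h(μ t) → L μ ^ β`, so the ray
is crossed strictly downwards when `1 - L μ ^ β < μ` and strictly upwards when `1 - L μ ^ β > μ`.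
Condition (M) makes `h` decreasing up to a factor close to `1`, which extends these inequalities
from the ray to the whole region beyond it. Hence `y / t` is squeezed to the root `Λ` of
`Λ + L Λ ^ β = 1`.

That `y → ∞`, i.e. `x → 0`, follows because `(F⁻¹)' = -f ∘ F⁻¹` eventually gives `x + (L + 1) F⁻¹` a
derivative at most `-f(x)`: so `x` converges, and a limit `c > 0` would leave this derivative below
`-f(c) / 2`. -/

section LongTimeBehaviour

variable {w w' : ℝ → ℝ}

lemma exists_forall_sub_le_mul_sub_of_hasDerivAt_le {C : ℝ}
    (hw : ∀ᶠ t in atTop, HasDerivAt w (w' t) t) (hw' : ∀ᶠ t in atTop, w' t ≤ C) :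
    ∃ T, ∀ s t, T ≤ s → s ≤ t → w t - w s ≤ C * (t - s) := by
  obtain ⟨T, hT⟩ := eventually_atTop.1 (hw.and hw')
  refine ⟨T, fun s t hs hst => ?_⟩
  refine (convex_Ici T).image_sub_le_mul_sub_of_deriv_le
    (fun r hr => (hT r hr).1.continuousAt.continuousWithinAt)
    (fun r hr => (hT r (interior_subset hr)).1.differentiableAt.differentiableWithinAt)
    (fun r hr => ?_) s hs t (hs.trans hst) hst
  obtain ⟨hderiv, hle⟩ := hT r (interior_subset hr)
  rwa [hderiv.deriv]

lemma tendsto_atBot_of_hasDerivAt_le_neg {c : ℝ} (hc : 0 < c)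
    (hw : ∀ᶠ t in atTop, HasDerivAt w (w' t) t) (hw' : ∀ᶠ t in atTop, w' t ≤ -c) :
    Tendsto w atTop atBot := by
  obtain ⟨T, hT⟩ := exists_forall_sub_le_mul_sub_of_hasDerivAt_le hw hw'
  have hline : Tendsto (fun t => (w T + c * T) + -c * t) atTop atBot :=
    tendsto_atBot_add_const_left _ _ (tendsto_id.const_mul_atTop_of_neg (neg_lt_zero.2 hc))
  refine tendsto_atBot_mono' _ ?_ hline
  filter_upwards [eventually_ge_atTop T] with t ht
  linarith [hT T t le_rfl ht]

lemma exists_tendsto_of_hasDerivAt_nonpos {b : ℝ}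
    (hw : ∀ᶠ t in atTop, HasDerivAt w (w' t) t) (hw' : ∀ᶠ t in atTop, w' t ≤ 0)
    (hb : ∀ᶠ t in atTop, b ≤ w t) : ∃ c, Tendsto w atTop (𝓝 c) := by
  obtain ⟨T, hT⟩ := exists_forall_sub_le_mul_sub_of_hasDerivAt_le hw hw'
  have hanti : Antitone fun t => w (max t T) := fun s t hst => by
    linarith [hT _ _ (le_max_right s T) (max_le_max_right T hst)]
  have heq : (fun t => w (max t T)) =ᶠ[atTop] w := by
    filter_upwards [eventually_ge_atTop T] with t ht
    rw [max_eq_left ht]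
  rcases tendsto_atTop_of_antitone hanti with hbot | ⟨c, hc⟩
  · obtain ⟨t, hlt, hle⟩ := (((hbot.congr' heq).eventually_lt_atBot b).and hb).exists
    exact absurd hle hlt.not_ge
  · exact ⟨c, hc.congr' heq⟩

lemma eventually_nonpos_of_hasDerivAt_le_neg {c : ℝ} (hc : 0 < c)
    (hw : ∀ᶠ t in atTop, HasDerivAt w (w' t) t)
    (hw' : ∀ᶠ t in atTop, 0 ≤ w t → w' t ≤ -c) : ∀ᶠ t in atTop, w t ≤ 0 := by
  have hfreq : ∃ᶠ t in atTop, w t ≤ 0 := fun hpos => by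
    have hpos : ∀ᶠ t in atTop, 0 < w t := hpos.mono fun t => not_le.1
    have hbot := tendsto_atBot_of_hasDerivAt_le_neg hc hw
      (hw'.mp (hpos.mono fun t ht himp => himp ht.le))
    obtain ⟨t, hle, hlt⟩ := ((hbot.eventually_le_atBot 0).and hpos).exists
    exact hlt.not_ge hle
  obtain ⟨s, hs, hall⟩ := (hfreq.and_eventually (eventually_forall_ge_atTop.2 (hw.and hw'))).exists
  filter_upwards [eventually_ge_atTop s] with t ht
  exact image_le_of_deriv_right_lt_deriv_boundary' (B := fun _ => 0) (B' := fun _ => 0)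
    (fun r hr => (hall r hr.1).1.continuousAt.continuousWithinAt)
    (fun r hr => (hall r hr.1).1.hasDerivWithinAt) hs continuousOn_const
    (fun r _ => hasDerivWithinAt_const r _ _)
    (fun r hr hzero => by linarith [(hall r hr.1).2 hzero.ge]) ⟨ht, le_rfl⟩

end LongTimeBehaviour

lemma pos_of_hasDerivAt_pos_of_eq_zero {x x' : ℝ → ℝ} {a : ℝ}
    (hcont : ContinuousWithinAt x (Ioi a) a) (ha : 0 < x a)
    (hx : ∀ t, a < t → HasDerivAt x (x' t) t) (hzero : ∀ t, a < t → x t = 0 → 0 < x' t) :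
    ∀ t, a < t → 0 < x t := by
  have hnonneg : ∀ t, a < t → 0 ≤ x t := fun t ht => by
    obtain ⟨s, hs, has, hst⟩ :=
      ((hcont.eventually (lt_mem_nhds ha)).and (Ioo_mem_nhdsGT ht)).exists
    have hlt : ∀ {r}, r ∈ Icc s t → a < r := fun hr => has.trans_le hr.1
    have hneg := image_le_of_deriv_right_lt_deriv_boundary' (f := fun r => -x r)
      (f' := fun r => -x' r) (B := fun _ => 0) (B' := fun _ => 0)
      (fun r hr => (hx r (hlt hr)).continuousAt.continuousWithinAt.neg)
      (fun r hr => (hx r (hlt (Ico_subset_Icc_self hr))).neg.hasDerivWithinAt)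
      (neg_nonpos.2 hs.le) continuousOn_const (fun r _ => hasDerivWithinAt_const r _ _)
      (fun r hr hr0 => neg_lt_zero.2
        (hzero r (hlt (Ico_subset_Icc_self hr)) (neg_eq_zero.1 hr0)))
      ⟨hst.le, le_rfl⟩
    exact neg_nonpos.1 hneg
  refine fun t ht => (hnonneg t ht).lt_of_ne fun h0 => ?_
  have hmin : IsLocalMin x t := by
    filter_upwards [Ioi_mem_nhds ht] with s hs
    exact h0 ▸ hnonneg s hs
  exact (hzero t ht h0.symm).ne' (hmin.hasDerivAt_eq_zero (hx t ht))

lemma tendsto_zero_of_hasDerivAt_neg_add {f g x k k' : ℝ → ℝ}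
    (hf : ContinuousOn f (Ioi 0)) (hf_pos : ∀ y, 0 < y → 0 < f y)
    (hx_pos : ∀ᶠ t in atTop, 0 < x t) (hx : ∀ᶠ t in atTop, HasDerivAt x (-f (x t) + g t) t)
    (hk : ∀ᶠ t in atTop, HasDerivAt k (k' t) t) (hgk : ∀ᶠ t in atTop, g t ≤ -k' t)
    (hk_zero : Tendsto k atTop (𝓝 0)) : Tendsto x atTop (𝓝 0) := by
  have hw : ∀ᶠ t in atTop, HasDerivAt (fun s => x s + k s) (-f (x t) + g t + k' t) t :=
    hx.mp (hk.mono fun t hkt hxt => hxt.add hkt)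
  have hw_nonpos : ∀ᶠ t in atTop, -f (x t) + g t + k' t ≤ 0 := by
    filter_upwards [hx_pos, hgk] with t hxt hgt
    linarith [hf_pos _ hxt]
  have hw_bdd : ∀ᶠ t in atTop, -1 ≤ x t + k t := by
    filter_upwards [hx_pos, hk_zero.eventually (lt_mem_nhds neg_one_lt_zero)] with t hxt hkt
    linarith
  obtain ⟨c, hc⟩ := exists_tendsto_of_hasDerivAt_nonpos hw hw_nonpos hw_bdd
  have hxc : Tendsto x atTop (𝓝 c) := by simpa using hc.sub hk_zero
  have hc_nonneg : 0 ≤ c := ge_of_tendsto hxc (hx_pos.mono fun t => le_of_lt)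
  rcases hc_nonneg.eq_or_lt with rfl | hc_pos
  · exact hxc
  have hfx : Tendsto (fun t => f (x t)) atTop (𝓝 (f c)) :=
    (hf.continuousAt (Ioi_mem_nhds hc_pos)).tendsto.comp hxc
  have hw_neg : ∀ᶠ t in atTop, -f (x t) + g t + k' t ≤ -(f c / 2) := by
    filter_upwards [hfx.eventually (lt_mem_nhds (half_lt_self (hf_pos c hc_pos))), hgk]
      with t hft hgt
    linarith
  have hbot := tendsto_atBot_of_hasDerivAt_le_neg (half_pos (hf_pos c hc_pos)) hw hw_neg
  exact absurd hc (not_tendsto_nhds_of_tendsto_atBot hbot c)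

section Primitive

lemma hasStrictDerivAt_of_eq_integral_left {k F : ℝ → ℝ} {s : Set ℝ} {a y : ℝ}
    (hs_open : IsOpen s) (hs_conn : s.OrdConnected) (hk : ContinuousOn k s) (ha : a ∈ s)
    (hF : ∀ z ∈ s, F z = ∫ u in z..a, k u) (hy : y ∈ s) : HasStrictDerivAt F (-k y) y := by
  have hint : IntervalIntegrable k volume y a :=
    (hk.mono (hs_conn.uIcc_subset hy ha)).intervalIntegrable
  refine (intervalIntegral.integral_hasStrictDerivAt_left hint
    (hk.stronglyMeasurableAtFilter hs_open y hy)
    (hk.continuousAt (hs_open.mem_nhds hy))).congr_of_eventuallyEq ?_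
  filter_upwards [hs_open.mem_nhds hy] with z hz
  exact (hF z hz).symm

lemma hasDerivAt_of_rightInverse_of_injOn {F Finv : ℝ → ℝ} {F' t : ℝ} {s u : Set ℝ}
    (hs : IsOpen s) (hu : u ∈ 𝓝 t) (hF_inj : InjOn F s)
    (hFinv : ∀ r ∈ u, Finv r ∈ s ∧ F (Finv r) = r)
    (hF : HasStrictDerivAt F F' (Finv t)) (hF' : F' ≠ 0) : HasDerivAt Finv F'⁻¹ t := by
  obtain ⟨hmem, heq⟩ := hFinv t (mem_of_mem_nhds hu)
  have hleft : ∀ᶠ y in 𝓝 (Finv t), Finv (F y) = y := by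
    filter_upwards [hs.mem_nhds hmem, hF.hasDerivAt.continuousAt.preimage_mem_nhds
      (by rwa [heq])] with y hy hFy
    exact hF_inj (hFinv _ hFy).1 hy (hFinv _ hFy).2
  simpa only [heq] using (hF.to_local_left_inverse hF' hleft).hasDerivAt

variable {f F Finv : ℝ → ℝ}

lemma strictAntiOn_of_hasDerivAt_neg_one_div (hf_pos : ∀ y, 0 < y → 0 < f y)
    (hF : ∀ y, 0 < y → HasDerivAt F (-(1 / f y)) y) : StrictAntiOn F (Ioi 0) := by
  refine strictAntiOn_of_deriv_neg (convex_Ioi 0)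
    (fun y hy => (hF y hy).continuousAt.continuousWithinAt) fun y hy => ?_
  have hy : 0 < y := interior_subset hy
  rw [(hF y hy).deriv]
  exact neg_lt_zero.2 (one_div_pos.2 (hf_pos y hy))

lemma antitoneOn_rightInverse_of_strictAntiOn (hF : StrictAntiOn F (Ioi 0))
    (hFinv : ∀ t, 0 ≤ t → 0 < Finv t ∧ F (Finv t) = t) : AntitoneOn Finv (Ici 0) := by
  intro s hs t ht hst
  rwa [← hF.le_iff_ge (hFinv s hs).1 (hFinv t ht).1, (hFinv s hs).2, (hFinv t ht).2]

lemma tendsto_atTop_comp_of_strictAntiOn {x : ℝ → ℝ} (hF : StrictAntiOn F (Ioi 0))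
    (hFinv : ∀ t, 0 ≤ t → 0 < Finv t ∧ F (Finv t) = t) (hx_pos : ∀ᶠ t in atTop, 0 < x t)
    (hx : Tendsto x atTop (𝓝 0)) : Tendsto (fun t => F (x t)) atTop atTop := by
  refine tendsto_atTop.2 fun b => ?_
  obtain ⟨hpos, heq⟩ := hFinv (max b 0) (le_max_right b 0)
  filter_upwards [hx_pos, hx.eventually (gt_mem_nhds hpos)] with t ht_pos ht_lt
  calc b ≤ F (Finv (max b 0)) := heq.symm ▸ le_max_left b 0
    _ ≤ F (x t) := (hF ht_pos hpos ht_lt).le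

end Primitive

section AlmostMonotone

/-- `f` is increasing near `0⁺` up to a constant factor arbitrarily close to `1`; for positive `f`
this is what Condition (M) provides. -/
def AlmostMonotoneNearZero (f : ℝ → ℝ) : Prop :=
  ∀ C : ℝ, 1 < C → ∀ᶠ v in 𝓝[>] (0 : ℝ), ∀ u ∈ Ioc 0 v, f u ≤ C * f v

/-- `h` is decreasing near `∞` up to a constant factor arbitrarily close to `1`; this is the form
in which Condition (M) is used for `h = f ∘ F⁻¹`. -/
def AlmostAntitoneAtTop (h : ℝ → ℝ) : Prop :=
  ∀ C : ℝ, 1 < C → ∀ᶠ s in atTop, ∀ t, s ≤ t → h t ≤ C * h s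

lemma almostMonotoneNearZero_of_tendsto_div {f φ : ℝ → ℝ} {δ : ℝ} (hδ : 0 < δ)
    (hf_pos : ∀ y, 0 < y → 0 < f y) (hφ : MonotoneOn φ (Ioo 0 δ))
    (hlim : Tendsto (fun y => f y / φ y) (𝓝[>] 0) (𝓝 1)) : AlmostMonotoneNearZero f := by
  intro C hC
  have hr : 1 < √C := Real.lt_sqrt_of_sq_lt (by simpa using hC)
  have hr_pos : 0 < √C := one_pos.trans hr
  obtain ⟨d, hd, hratio⟩ := mem_nhdsGT_iff_exists_Ioo_subset.1
    (hlim.eventually (Ioo_mem_nhds (inv_lt_one_of_one_lt₀ hr) hr))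
  have hcompare : ∀ y ∈ Ioo 0 d, f y ≤ √C * φ y ∧ φ y ≤ √C * f y := fun y hy => by
    obtain ⟨hlower, hupper⟩ := hratio hy
    have hφ_pos : 0 < φ y :=
      (div_pos_iff_of_pos_left (hf_pos y hy.1)).1 ((inv_pos.2 hr_pos).trans hlower)
    exact ⟨((div_lt_iff₀ hφ_pos).1 hupper).le,
      ((inv_mul_lt_iff₀ hr_pos).1 ((lt_div_iff₀ hφ_pos).1 hlower)).le⟩
  filter_upwards [Ioo_mem_nhdsGT hd, Ioo_mem_nhdsGT hδ] with v hvd hvδ u hu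
  calc f u ≤ √C * φ u := (hcompare u ⟨hu.1, hu.2.trans_lt hvd.2⟩).1
    _ ≤ √C * φ v := by gcongr; exact hφ ⟨hu.1, hu.2.trans_lt hvδ.2⟩ hvδ hu.2
    _ ≤ √C * (√C * f v) := by gcongr; exact (hcompare v hvd).2
    _ = C * f v := by rw [← mul_assoc, Real.mul_self_sqrt (one_pos.trans hC).le]

lemma AlmostMonotoneNearZero.comp_antitoneOn {f k : ℝ → ℝ} {a : ℝ}
    (hf : AlmostMonotoneNearZero f) (hk : AntitoneOn k (Ici a))
    (hk_zero : Tendsto k atTop (𝓝[>] 0)) : AlmostAntitoneAtTop fun t => f (k t) := by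
  intro C hC
  filter_upwards [hk_zero.eventually (hf C hC), eventually_ge_atTop a,
    eventually_forall_ge_atTop.2 (hk_zero.eventually self_mem_nhdsWithin)] with s hfs hs hpos t hst
  exact hfs _ ⟨hpos t hst, hk hs (hs.trans hst) hst⟩

end AlmostMonotone

section TransformedEquation

lemma exists_one_lt_mul_lt {a b : ℝ} (hab : a < b) : ∃ C, 1 < C ∧ C * a < b := by
  have hlim : Tendsto (fun C : ℝ => C * a) (𝓝[>] 1) (𝓝 (1 * a)) :=
    (continuous_mul_const a).continuousAt.tendsto.mono_left nhdsWithin_le_nhds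
  obtain ⟨C, hlt, hC⟩ := ((hlim.eventually (gt_mem_nhds (by rwa [one_mul]))).and
    self_mem_nhdsWithin).exists
  exact ⟨C, hC, hlt⟩

lemma div_le_mul_div_of_le_mul {g a b C : ℝ} (hg : 0 ≤ g) (ha : 0 < a) (hb : 0 < b)
    (hab : a ≤ C * b) : g / b ≤ C * (g / a) := by
  rw [← mul_div_assoc, div_le_div_iff₀ hb ha]
  calc g * a ≤ g * (C * b) := by gcongr
    _ = C * g * b := by ring

variable {g h y : ℝ → ℝ} {β L μ : ℝ}

lemma RVatInf.tendsto_div_comp_mul (hh : RVatInf h (-β)) (hh_pos : ∀ᶠ t in atTop, 0 < h t)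
    (hL : Tendsto (fun t => g t / h t) atTop (𝓝 L)) (hμ : 0 < μ) :
    Tendsto (fun t => g t / h (μ * t)) atTop (𝓝 (L * μ ^ β)) := by
  have hquot := hL.div (hh μ hμ) (rpow_pos_of_pos hμ _).ne'
  rw [rpow_neg hμ.le, div_inv_eq_mul] at hquot
  refine hquot.congr' ?_
  filter_upwards [hh_pos] with t ht
  exact div_div_div_cancel_right₀ ht.ne' _ _

lemma eventually_le_mul_of_one_sub_lt (hh : RVatInf h (-β)) (hh_pos : ∀ᶠ t in atTop, 0 < h t)
    (hh_anti : AlmostAntitoneAtTop h) (hg : ∀ᶠ t in atTop, 0 ≤ g t)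
    (hL : Tendsto (fun t => g t / h t) atTop (𝓝 L))
    (hy : ∀ᶠ t in atTop, HasDerivAt y (1 - g t / h (y t)) t) (hy_top : Tendsto y atTop atTop)
    (hμ : 0 < μ) (hlt : 1 - μ < L * μ ^ β) : ∀ᶠ t in atTop, y t ≤ μ * t := by
  obtain ⟨C, hC, hCμ⟩ := exists_one_lt_mul_lt hlt
  obtain ⟨q, hCq, hq⟩ := exists_between hCμ
  have hC_pos : 0 < C := one_pos.trans hC
  have hc : 0 < q / C - (1 - μ) := sub_pos.2 ((lt_div_iff₀' hC_pos).2 hCq)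
  have hray : Tendsto (fun t => μ * t) atTop atTop := tendsto_id.const_mul_atTop hμ
  have hw : ∀ᶠ t in atTop, HasDerivAt (fun s => y s - μ * s) (1 - g t / h (y t) - μ) t :=
    hy.mono fun t ht => ht.sub (by simpa using (hasDerivAt_id t).const_mul μ)
  refine (eventually_nonpos_of_hasDerivAt_le_neg hc hw ?_).mono fun t => sub_nonpos.1
  filter_upwards [(hh.tendsto_div_comp_mul hh_pos hL hμ).eventually (lt_mem_nhds hq), hg,
    hray.eventually hh_pos, hy_top.eventually hh_pos, hray.eventually (hh_anti C hC)]
    with t hqt hgt hh_ray hh_y hanti hle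
  have hcompare : g t / h (μ * t) ≤ C * (g t / h (y t)) :=
    div_le_mul_div_of_le_mul hgt hh_y hh_ray (hanti _ (sub_nonneg.1 hle))
  have hq_le : q / C ≤ g t / h (y t) := (div_le_iff₀' hC_pos).2 (hqt.le.trans hcompare)
  linarith

lemma eventually_mul_le_of_lt_one_sub (hh : RVatInf h (-β)) (hh_pos : ∀ᶠ t in atTop, 0 < h t)
    (hh_anti : AlmostAntitoneAtTop h) (hg : ∀ᶠ t in atTop, 0 ≤ g t)
    (hL : Tendsto (fun t => g t / h t) atTop (𝓝 L))
    (hy : ∀ᶠ t in atTop, HasDerivAt y (1 - g t / h (y t)) t) (hy_top : Tendsto y atTop atTop)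
    (hμ : 0 < μ) (hlt : L * μ ^ β < 1 - μ) : ∀ᶠ t in atTop, μ * t ≤ y t := by
  obtain ⟨C, hC, hCμ⟩ := exists_one_lt_mul_lt hlt
  obtain ⟨q, hCq, hq⟩ := exists_between hCμ
  have hray : Tendsto (fun t => μ * t) atTop atTop := tendsto_id.const_mul_atTop hμ
  have hw : ∀ᶠ t in atTop, HasDerivAt (fun s => μ * s - y s) (μ - (1 - g t / h (y t))) t :=
    hy.mono fun t ht => HasDerivAt.sub (by simpa using (hasDerivAt_id t).const_mul μ) ht
  refine (eventually_nonpos_of_hasDerivAt_le_neg (sub_pos.2 hq) hw ?_).mono fun t => sub_nonpos.1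
  filter_upwards [((hh.tendsto_div_comp_mul hh_pos hL hμ).const_mul C).eventually
      (gt_mem_nhds hCq), hg, hray.eventually hh_pos, hy_top.eventually hh_pos,
    hy_top.eventually (hh_anti C hC)] with t hqt hgt hh_ray hh_y hanti hle
  have hcompare : g t / h (y t) ≤ C * (g t / h (μ * t)) :=
    div_le_mul_div_of_le_mul hgt hh_ray hh_y (hanti _ (sub_nonneg.1 hle))
  linarith

theorem tendsto_div_of_hasDerivAt_one_sub_div {Λ : ℝ} (hβ : 0 ≤ β) (hh : RVatInf h (-β))
    (hh_pos : ∀ᶠ t in atTop, 0 < h t) (hh_anti : AlmostAntitoneAtTop h)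
    (hg : ∀ᶠ t in atTop, 0 ≤ g t) (hL : Tendsto (fun t => g t / h t) atTop (𝓝 L))
    (hy : ∀ᶠ t in atTop, HasDerivAt y (1 - g t / h (y t)) t) (hy_top : Tendsto y atTop atTop)
    (hΛ : 0 < Λ) (hΛ_root : Λ + L * Λ ^ β = 1) :
    Tendsto (fun t => y t / t) atTop (𝓝 Λ) := by
  have hL_nonneg : 0 ≤ L :=
    ge_of_tendsto hL (hg.mp (hh_pos.mono fun t hht hgt => div_nonneg hgt hht.le))
  refine tendsto_order.2 ⟨fun a ha => ?_, fun a ha => ?_⟩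
  · obtain ⟨μ, hμ_gt, hμΛ⟩ := exists_between (max_lt ha hΛ)
    obtain ⟨haμ, hμ⟩ := max_lt_iff.1 hμ_gt
    have hpow : L * μ ^ β ≤ L * Λ ^ β := by gcongr
    filter_upwards [eventually_mul_le_of_lt_one_sub hh hh_pos hh_anti hg hL hy hy_top hμ
      (by linarith), eventually_gt_atTop 0] with t ht ht_pos
    exact haμ.trans_le ((le_div_iff₀ ht_pos).2 ht)
  · obtain ⟨μ, hΛμ, hμa⟩ := exists_between ha
    have hpow : L * Λ ^ β ≤ L * μ ^ β := by gcongr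
    filter_upwards [eventually_le_mul_of_one_sub_lt hh hh_pos hh_anti hg hL hy hy_top
      (hΛ.trans hΛμ) (by linarith), eventually_gt_atTop 0] with t ht ht_pos
    exact ((div_le_iff₀ ht_pos).2 ht).trans_lt hμa

end TransformedEquation

section Solution

variable {f g F Finv x : ℝ → ℝ} {ξ L : ℝ}

lemma IsSol.pos (hx : IsSol f g ξ x) (hf_zero : f 0 = 0) (hg_pos : ∀ t, 0 < t → 0 < g t)
    (hξ : 0 < ξ) : ∀ t, 0 < t → 0 < x t := by
  obtain ⟨hcont, hinit, hderiv⟩ := hx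
  refine pos_of_hasDerivAt_pos_of_eq_zero ((hcont 0 self_mem_Ici).mono Ioi_subset_Ici_self)
    (hinit ▸ hξ) hderiv fun t ht hxt => ?_
  simpa only [hxt, hf_zero, neg_zero, zero_add] using hg_pos t ht

lemma IsSol.tendsto_zero (hx : IsSol f g ξ x) (hx_pos : ∀ t, 0 < t → 0 < x t)
    (hf : ContinuousOn f (Ioi 0)) (hf_pos : ∀ y, 0 < y → 0 < f y)
    (hFinv_pos : ∀ t, 0 < t → 0 < Finv t)
    (hFinv : ∀ t, 0 < t → HasDerivAt Finv (-f (Finv t)) t) (hFinv_zero : Tendsto Finv atTop (𝓝 0))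
    (hL : Tendsto (fun t => g t / f (Finv t)) atTop (𝓝 L)) : Tendsto x atTop (𝓝 0) := by
  have hpos := eventually_gt_atTop (0 : ℝ)
  refine tendsto_zero_of_hasDerivAt_neg_add hf hf_pos (hpos.mono hx_pos) (hpos.mono hx.2.2)
    (hpos.mono fun t ht => (hFinv t ht).const_mul (L + 1)) ?_
    (by simpa using hFinv_zero.const_mul (L + 1))
  filter_upwards [hpos, hL.eventually (gt_mem_nhds (lt_add_one L))] with t ht hlt
  have hle := (div_lt_iff₀ (hf_pos _ (hFinv_pos t ht))).1 hlt
  linarith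

lemma IsSol.hasDerivAt_comp (hx : IsSol f g ξ x) {t : ℝ} (ht : 0 < t) (hfx : f (x t) ≠ 0)
    (hF : HasDerivAt F (-(1 / f (x t))) (x t)) :
    HasDerivAt (fun s => F (x s)) (1 - g t / f (x t)) t := by
  refine (hF.comp t (hx.2.2 t ht)).congr_deriv ?_
  field_simp
  ring

end Solution

theorem stmt_3_general {f g F Finv x : ℝ → ℝ} {ξ β L Λ : ℝ}
    (hf : ContinuousOn f (Ioi 0)) (hf_pos : ∀ y, 0 < y → 0 < f y) (hf_zero : f 0 = 0)
    (hf_mono : AlmostMonotoneNearZero f) (hg_pos : ∀ t, 0 < t → 0 < g t)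
    (hF : ∀ y, 0 < y → F y = ∫ u in y..(1 : ℝ), 1 / f u)
    (hFinv : ∀ t, 0 ≤ t → 0 < Finv t ∧ F (Finv t) = t) (hFinv_zero : Tendsto Finv atTop (𝓝 0))
    (hξ : 0 < ξ) (hx : IsSol f g ξ x)
    (hβ : 0 ≤ β) (hRV : RVatInf (fun t => f (Finv t)) (-β))
    (hL : Tendsto (fun t => g t / f (Finv t)) atTop (𝓝 L))
    (hΛ : 0 < Λ) (hΛ_root : Λ + L * Λ ^ β = 1) :
    Tendsto x atTop (𝓝 0) ∧ Tendsto (fun t => F (x t) / t) atTop (𝓝 Λ) := by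
  have hpos := eventually_gt_atTop (0 : ℝ)
  have hF_deriv : ∀ y, 0 < y → HasStrictDerivAt F (-(1 / f y)) y := fun y hy =>
    hasStrictDerivAt_of_eq_integral_left isOpen_Ioi ordConnected_Ioi
      (continuousOn_const.div hf fun u hu => (hf_pos u hu).ne') (mem_Ioi.2 one_pos) hF hy
  have hF_anti := strictAntiOn_of_hasDerivAt_neg_one_div hf_pos fun y hy =>
    (hF_deriv y hy).hasDerivAt
  have hFinv_deriv : ∀ t, 0 < t → HasDerivAt Finv (-f (Finv t)) t := fun t ht => by
    have hfFinv : 0 < f (Finv t) := hf_pos _ (hFinv t ht.le).1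
    simpa [inv_neg] using hasDerivAt_of_rightInverse_of_injOn isOpen_Ioi (Ici_mem_nhds ht)
      hF_anti.injOn hFinv (hF_deriv _ (hFinv t ht.le).1) (neg_lt_zero.2 (one_div_pos.2 hfFinv)).ne
  have hx_pos := hx.pos hf_zero hg_pos hξ
  have hx_zero := hx.tendsto_zero hx_pos hf hf_pos (fun t ht => (hFinv t ht.le).1) hFinv_deriv
    hFinv_zero hL
  have hFx_top := tendsto_atTop_comp_of_strictAntiOn hF_anti hFinv (hpos.mono hx_pos) hx_zero
  have hFinv_nhdsGT : Tendsto Finv atTop (𝓝[>] 0) :=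
    tendsto_nhdsWithin_iff.2 ⟨hFinv_zero, hpos.mono fun t ht => (hFinv t ht.le).1⟩
  have hFx_deriv : ∀ᶠ t in atTop,
      HasDerivAt (fun s => F (x s)) (1 - g t / f (Finv (F (x t)))) t := by
    filter_upwards [hpos, hFx_top.eventually_ge_atTop 0] with t ht hFx
    obtain ⟨hmem, heq⟩ := hFinv _ hFx
    rw [hF_anti.injOn hmem (hx_pos t ht) heq]
    exact hx.hasDerivAt_comp ht (hf_pos _ (hx_pos t ht)).ne' (hF_deriv _ (hx_pos t ht)).hasDerivAt
  exact ⟨hx_zero, tendsto_div_of_hasDerivAt_one_sub_div hβ hRV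
    (hpos.mono fun t ht => hf_pos _ (hFinv t ht.le).1)
    (hf_mono.comp_antitoneOn (antitoneOn_rightInverse_of_strictAntiOn hF_anti hFinv)
      hFinv_nhdsGT)
    (hpos.mono fun t ht => (hg_pos t ht).le) hL hFx_deriv hFx_top hΛ hΛ_root⟩

/-- Theorem 2.3(ii) (Theorem `FxtLambda`, part (ii)): under the base hypotheses and
Condition (M), if `f∘F⁻¹ ∈ RV_∞(-1)`, `F⁻¹ ∈ RV_∞(0)` and `g(t)/(f∘F⁻¹)(t) → L > 0`,
then the solution of `x' = -f(x) + g`, `x(0) = ξ > 0`, obeys `x(t) → 0` and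
`F(x(t))/t → 1/(L+1)`. -/
theorem stmt_3
    (f g F Finv : ℝ → ℝ) (ξ : ℝ) (x : ℝ → ℝ)
    (hf_cont : Continuous f) (hf_lip : LocallyLipschitz f)
    (hf_sign : ∀ y : ℝ, y ≠ 0 → 0 < y * f y) (hf_zero : f 0 = 0)
    (hg_cont : ContinuousOn g (Set.Ici 0)) (hg_pos : ∀ t : ℝ, 0 < t → 0 < g t)
    (hF : ∀ y : ℝ, 0 < y → F y = ∫ u in y..(1:ℝ), 1 / f u)
    (hF_top : Tendsto F (nhdsWithin 0 (Set.Ioi 0)) atTop)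
    (hF_anti : StrictAntiOn F (Set.Ioi 0))
    (hFinv : ∀ t : ℝ, 0 ≤ t → 0 < Finv t ∧ F (Finv t) = t)
    (hFinv_to0 : Tendsto Finv atTop (nhds 0))
    (hξ : 0 < ξ) (hx : IsSol f g ξ x)
    (hM : ∃ δ : ℝ, 0 < δ ∧ ∃ φ : ℝ → ℝ, StrictMonoOn φ (Set.Ioo 0 δ) ∧
      Tendsto (fun y => f y / φ y) (nhdsWithin 0 (Set.Ioi 0)) (nhds 1))
    (hfFinvRV : RVatInf (fun t => f (Finv t)) (-1))
    (hFinvRV : RVatInf Finv 0)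
    (L : ℝ) (hLpos : 0 < L)
    (hL : Tendsto (fun t => g t / f (Finv t)) atTop (nhds L)) :
    Tendsto x atTop (nhds 0) ∧
    Tendsto (fun t => F (x t) / t) atTop (nhds (1 / (L + 1))) := by
  obtain ⟨δ, hδ, φ, hφ, hlim⟩ := hM
  have hf_pos : ∀ y, 0 < y → 0 < f y := fun y hy => pos_of_mul_pos_right (hf_sign y hy.ne') hy.le
  exact stmt_3_general hf_cont.continuousOn hf_pos hf_zero
    (almostMonotoneNearZero_of_tendsto_div hδ hf_pos hφ.monotoneOn hlim) hg_pos hF hFinv hFinv_to0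
    hξ hx zero_le_one hfFinvRV hL (by positivity) (by rw [rpow_one]; field_simp; ring)
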